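/- For every t > 0 and every p ∈ [1,∞], the solution satisfies |u(t)|_{L^p} ≤ |u(t)|_{L∞} ≤ ∫_{S¹} u_x(t)⁺ ≤ min(D, σ⁻¹ t⁻¹), where g⁺ = max(g,0). -/

import Mathlib

open MeasureTheory Set
open scoped ENNReal

/-- The `L^p` norm (on the circle, i.e. over one period `(0,1]`) of the `m`-th
derivative of a function `v : ℝ → ℝ` (identified with a function on `S¹ = ℝ/ℤ`). -/
noncomputable def sobLp (m : ℕ) (p : ℝ≥0∞) (v : ℝ → ℝ) : ℝ :=
  (eLpNorm (iteratedDeriv m v) p (volume.restrict (Ioc (0:ℝ) 1))).toReal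

/-- `u` is a smooth, space-periodic, zero-mean-value solution of the generalised
Burgers equation `u_t + f'(u) u_x - ν u_xx = 0` with strongly convex `f` and
nonzero initial condition. -/
structure IsBurgersSolution (f : ℝ → ℝ) (σ ν : ℝ) (u : ℝ → ℝ → ℝ) : Prop where
  hf : ContDiff ℝ (⊤ : ℕ∞) f
  hσ : 0 < σ
  hconv : ∀ y, σ ≤ iteratedDeriv 2 f y
  hν : 0 < ν
  hu : ContDiffOn ℝ (⊤ : ℕ∞) (Function.uncurry u) (Ici (0:ℝ) ×ˢ univ)
  hper : ∀ t x, u t (x + 1) = u t x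
  hpde : ∀ t, 0 < t → ∀ x,
    deriv (fun s => u s x) t + deriv f (u t x) * deriv (u t) x
      - ν * deriv (deriv (u t)) x = 0
  hmean : ∀ t, 0 ≤ t → ∫ x in Ioc (0:ℝ) 1, u t x = 0
  hinit : ∃ x, u 0 x ≠ 0

/-- The quantity `D = max(|u₀|₁⁻¹, |u₀|_{1,∞})`. -/
noncomputable def burgersD (u : ℝ → ℝ → ℝ) : ℝ :=
  max (sobLp 0 1 (u 0))⁻¹ (sobLp 1 ⊤ (u 0))

/-- `T₁ = D⁻² C̃⁻¹ / 4`. -/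
noncomputable def burgersT₁ (D Ct : ℝ) : ℝ := (D ^ 2)⁻¹ * Ct⁻¹ / 4

/-- `T₂ = max(3T₁/2, 2Dσ⁻¹)`. -/
noncomputable def burgersT₂ (σ D Ct : ℝ) : ℝ :=
  max (3 / 2 * burgersT₁ D Ct) (2 * D * σ⁻¹)

/-- Time average over `[T₁, T₂]`. -/
noncomputable def timeAvg (T₁ T₂ : ℝ) (A : ℝ → ℝ) : ℝ :=
  (T₂ - T₁)⁻¹ * ∫ t in T₁..T₂, A t

/-- The structure function `S_p(ℓ)`. -/
noncomputable def structFun (T₁ T₂ : ℝ) (u : ℝ → ℝ → ℝ) (p ℓ : ℝ) : ℝ :=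
  timeAvg T₁ T₂ (fun t => ∫ x in Ioc (0:ℝ) 1, |u t (x + ℓ) - u t x| ^ p)

/-!
By Oleinik's argument, doubling the space variable, a one-sided Lipschitz constant `M` of the
solution obeys the Riccati inequality `M' ≤ -σ M²`: where `u(t, x + h) - u(t, x) - M(t) h` is
maximal, both points have slope `M(t)`, diffusion pushes the gap down, and strong convexity makes
the speed `f'(u)` larger by at least `σ M(t) h` at the right end. Hence
`u_x(t) ≤ M₀ / (1 + σ M₀ t)` with `M₀ = |∂ₓu₀|_{L∞}`. A periodic function of mean value zero
vanishes somewhere and can climb by at most `∫ u_x⁺` along a period, which bounds its sup norm.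
-/

open Filter Function

section DerivativeTests

variable {g v : ℝ → ℝ} {x m g' : ℝ}

theorem deriv_deriv_nonpos_of_isLocalMax (hg : ContinuousAt g x) (h : IsLocalMax g x) :
    deriv (deriv g) x ≤ 0 := by
  by_contra! hpos
  have hmin : IsLocalMin g x := isLocalMin_of_deriv_deriv_pos hpos h.deriv_eq_zero hg
  have hconst : g =ᶠ[nhds x] fun _ ↦ g x := by
    filter_upwards [h, hmin] with y hle hge using le_antisymm hle hge
  have hzero : deriv (deriv g) x = 0 := by simpa using hconst.deriv.deriv_eq
  exact hpos.ne' hzero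

theorem deriv_eq_and_deriv_deriv_nonpos_of_isLocalMax_sub_mul (hv : Differentiable ℝ v)
    (h : IsLocalMax (fun z ↦ v z - m * z) x) : deriv v x = m ∧ deriv (deriv v) x ≤ 0 := by
  have hderiv : deriv (fun z ↦ v z - m * z) = fun z ↦ deriv v z - m := by
    funext z
    simpa using ((hv z).hasDerivAt.fun_sub ((hasDerivAt_id z).const_mul m)).deriv
  have hfirst := h.deriv_eq_zero
  have hcont : Continuous fun z ↦ v z - m * z := hv.continuous.sub (by fun_prop)
  have hsecond := deriv_deriv_nonpos_of_isLocalMax hcont.continuousAt h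
  rw [hderiv] at hfirst hsecond
  exact ⟨sub_eq_zero.1 hfirst, by simpa only [deriv_sub_const] using hsecond⟩

theorem deriv_eq_and_deriv_deriv_nonneg_of_isLocalMin_sub_mul (hv : Differentiable ℝ v)
    (h : IsLocalMin (fun z ↦ v z - m * z) x) : deriv v x = m ∧ 0 ≤ deriv (deriv v) x := by
  have hneg : IsLocalMax (fun z ↦ (-v) z - -m * z) x := by
    simpa only [Pi.neg_apply, neg_mul, neg_sub, sub_neg_eq_add, neg_add_eq_sub] using h.neg
  simpa only [deriv.neg', neg_inj, deriv.fun_neg', Left.neg_nonpos_iff] using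
    deriv_eq_and_deriv_deriv_nonpos_of_isLocalMax_sub_mul hv.neg hneg

theorem nonneg_of_hasDerivAt_of_eventually_le_left (hg : HasDerivAt g g' x)
    (h : ∀ᶠ y in nhdsWithin x (Iio x), g y ≤ g x) : 0 ≤ g' := by
  refine ge_of_tendsto (hg.tendsto_slope.mono_left (nhdsLT_le_nhdsNE x)) ?_
  filter_upwards [h, self_mem_nhdsWithin] with y hle hlt
  rw [slope_def_field]
  exact div_nonneg_of_nonpos (sub_nonpos.2 hle) (sub_nonpos.2 hlt.le)

end DerivativeTests

section PeriodicFunctions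

variable {L : ℝ}

theorem periodic_deriv {E : Type*} [NormedAddCommGroup E] [NormedSpace ℝ E] {g : ℝ → E}
    (hg : Periodic g L) : Periodic (deriv g) L := fun x ↦ by
  rw [← deriv_comp_add_const, funext hg]

theorem exists_forall_le_of_isCompact_of_periodic {X : Type*} [TopologicalSpace X] {K : Set X}
    {F : X → ℝ → ℝ} (hK : IsCompact K) (hne : K.Nonempty) (hL : 0 < L)
    (hF : ContinuousOn (uncurry F) (K ×ˢ univ)) (hper : ∀ k ∈ K, Periodic (F k) L) :
    ∃ k ∈ K, ∃ x, ∀ k' ∈ K, ∀ x', F k' x' ≤ F k x := by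
  obtain ⟨⟨k, x⟩, ⟨hk, -⟩, hmax⟩ := (hK.prod isCompact_Icc).exists_isMaxOn
    (hne.prod (nonempty_Icc.2 hL.le)) (hF.mono (prod_mono_right (subset_univ (Icc 0 L))))
  refine ⟨k, hk, x, fun k' hk' x' ↦ ?_⟩
  obtain ⟨y, hy, hxy⟩ := (hper k' hk').exists_mem_Ico₀ hL x'
  rw [hxy]
  exact hmax (show (k', y) ∈ K ×ˢ Icc 0 L from ⟨hk', Ico_subset_Icc_self hy⟩)

theorem norm_le_toReal_eLpNorm_top_of_periodic {E : Type*} [NormedAddCommGroup E] {g : ℝ → E}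
    (hg : Continuous g) (hper : Periodic g L) (hL : 0 < L) (x : ℝ) :
    ‖g x‖ ≤ (eLpNorm g ⊤ (volume.restrict (Ioc 0 L))).toReal := by
  set C := (eLpNorm g ⊤ (volume.restrict (Ioc 0 L))).toReal
  obtain ⟨B, hB⟩ := isCompact_Icc.exists_bound_of_continuousOn (s := Icc 0 L) hg.continuousOn
  have hfin : eLpNorm g ⊤ (volume.restrict (Ioc 0 L)) ≠ ⊤ := by
    rw [eLpNorm_exponent_top]
    refine (eLpNormEssSup_lt_top_of_ae_bound (C := B) ?_).ne
    exact ae_restrict_of_forall_mem measurableSet_Ioc fun y hy ↦ hB y (Ioc_subset_Icc_self hy)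
  have hae : (fun y ↦ max ‖g y‖ C) =ᵐ[volume.restrict (Ioc 0 L)] fun _ ↦ C := by
    filter_upwards [ae_le_eLpNormEssSup (f := g) (μ := volume.restrict (Ioc 0 L))] with y hy
    rw [← eLpNorm_exponent_top] at hy
    exact max_eq_right (by simpa only [toReal_enorm] using ENNReal.toReal_mono hfin hy)
  have hle : ∀ y ∈ Ioc 0 L, ‖g y‖ ≤ C := fun y hy ↦ max_eq_right_iff.1 <|
    Measure.eqOn_Ioc_of_ae_eq _ hae (by fun_prop) continuousOn_const hy
  obtain ⟨y, hy, hxy⟩ := hper.exists_mem_Ioc hL x 0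
  rw [hxy]
  exact hle y (by simpa only [zero_add] using hy)

variable {v : ℝ → ℝ}

theorem sub_le_integral_max_deriv_of_periodic (hv : ContDiff ℝ 1 v) (hper : Periodic v L)
    (hL : 0 < L) (b c : ℝ) : v c - v b ≤ ∫ x in Ioc 0 L, max (deriv v x) 0 := by
  have hderiv : Continuous (deriv v) := hv.continuous_deriv le_rfl
  have hmax : Continuous fun x ↦ max (deriv v x) 0 := hderiv.max continuous_const
  have hmax_per : Periodic (fun x ↦ max (deriv v x) 0) L := fun x ↦ by
    simp only [periodic_deriv hper x]
  obtain ⟨y, ⟨hby, hyb⟩, hcy⟩ := hper.exists_mem_Ico hL c b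
  calc v c - v b = ∫ x in b..y, deriv v x := by
        rw [hcy, intervalIntegral.integral_deriv_eq_sub
          (fun z _ ↦ hv.differentiable one_ne_zero z) (hderiv.intervalIntegrable _ _)]
    _ ≤ ∫ x in b..y, max (deriv v x) 0 :=
        intervalIntegral.integral_mono_on hby (hderiv.intervalIntegrable _ _)
          (hmax.intervalIntegrable _ _) fun z _ ↦ le_max_left _ _
    _ ≤ ∫ x in b..b + L, max (deriv v x) 0 :=
        intervalIntegral.integral_mono_interval le_rfl hby hyb.le
          (Eventually.of_forall fun z ↦ le_max_right _ _) (hmax.intervalIntegrable _ _)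
    _ = ∫ x in Ioc 0 L, max (deriv v x) 0 := by
        rw [hmax_per.intervalIntegral_add_eq b 0, zero_add, intervalIntegral.integral_of_le hL.le]

theorem abs_le_integral_max_deriv_of_periodic (hv : ContDiff ℝ 1 v) (hper : Periodic v L)
    (hL : 0 < L) (hmean : ∫ x in Ioc 0 L, v x = 0) (x : ℝ) :
    |v x| ≤ ∫ y in Ioc 0 L, max (deriv v y) 0 := by
  obtain ⟨a, -, ha⟩ := exists_eq_interval_average hL.ne hv.continuous.continuousOn
  have hva : v a = 0 := by
    rw [ha, interval_average_eq, intervalIntegral.integral_of_le hL.le, hmean, smul_zero]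
  have hup := sub_le_integral_max_deriv_of_periodic hv hper hL a x
  have hdown := sub_le_integral_max_deriv_of_periodic hv hper hL x a
  rw [hva] at hup hdown
  exact abs_le.2 ⟨by linarith, by linarith⟩

end PeriodicFunctions

/-- `u` is a classical solution, `L`-periodic in space, of `u_t + a(u) u_x - ν u_xx = 0` on
`(0, ∞) × ℝ`, continuous up to `t = 0`. Here `a` is the speed, the derivative `f'` of the flux. -/
structure IsPeriodicClassicalSolution (a : ℝ → ℝ) (ν L : ℝ) (u : ℝ → ℝ → ℝ) : Prop where
  continuousOn : ContinuousOn (uncurry u) (Ici 0 ×ˢ univ)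
  contDiff : ∀ t, 0 < t → ContDiff ℝ 2 (u t)
  differentiableAt : ∀ t, 0 < t → ∀ x, DifferentiableAt ℝ (fun s ↦ u s x) t
  periodic : ∀ t, 0 ≤ t → Periodic (u t) L
  pde : ∀ t, 0 < t → ∀ x,
    deriv (fun s ↦ u s x) t + a (u t x) * deriv (u t) x - ν * deriv (deriv (u t)) x = 0

/-- `M` is a nonnegative supersolution of the Riccati equation `M' = -σ M²`, which governs the decay
of one-sided Lipschitz constants. -/
structure IsRiccatiSupersolution (σ : ℝ) (M : ℝ → ℝ) : Prop where
  continuousOn : ContinuousOn M (Ici 0)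
  differentiableAt : ∀ t, 0 < t → DifferentiableAt ℝ M t
  nonneg : ∀ t, 0 < t → 0 ≤ M t
  le_deriv : ∀ t, 0 < t → -(σ * M t ^ 2) ≤ deriv M t

/-- The amount by which the increment of `u` at time `t` from `x` to `x + h` exceeds `M t * h`: the
doubled-variable functional of Oleinik's argument. The term `ε * t` makes strict the differential
inequality at a maximum. -/
def slopeExcess (u : ℝ → ℝ → ℝ) (M : ℝ → ℝ) (ε t h x : ℝ) : ℝ :=
  u t (x + h) - u t x - M t * h - ε * t

theorem isLocalMax_and_isLocalMin_of_forall_increment_le {v : ℝ → ℝ} {m L h x : ℝ}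
    (hh : h ∈ Ioo 0 L)
    (hmax : ∀ k ∈ Icc 0 L, ∀ y, v (y + k) - v y - m * k ≤ v (x + h) - v x - m * h) :
    IsLocalMax (fun z ↦ v z - m * z) (x + h) ∧ IsLocalMin (fun z ↦ v z - m * z) x := by
  have hIcc : Icc 0 L ∈ nhds h := Icc_mem_nhds hh.1 hh.2
  constructor
  · have hright : Tendsto (fun z ↦ z - x) (nhds (x + h)) (nhds h) := by
      simpa only [add_sub_cancel_left] using (continuous_sub_right x).tendsto (x + h)
    filter_upwards [hright hIcc] with z hz
    have hle := hmax (z - x) hz x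
    rw [add_sub_cancel] at hle
    linarith
  · have hleft : Tendsto (fun z ↦ x + h - z) (nhds x) (nhds h) := by
      simpa only [add_sub_cancel_left] using (continuous_sub_left (x + h)).tendsto x
    filter_upwards [hleft hIcc] with z hz
    have hle := hmax (x + h - z) hz z
    rw [add_sub_cancel] at hle
    linarith

section SlopeExcess

variable {M : ℝ → ℝ} {L ε t h x : ℝ} {u : ℝ → ℝ → ℝ}

theorem continuousOn_slopeExcess (hu : ContinuousOn (uncurry u) (Ici 0 ×ˢ univ))
    (hM : ContinuousOn M (Ici 0)) :
    ContinuousOn (fun q : (ℝ × ℝ) × ℝ ↦ slopeExcess u M ε q.1.1 q.1.2 q.2)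
      ((Ici 0 ×ˢ univ) ×ˢ univ) := by
  have hright : ContinuousOn (fun q : (ℝ × ℝ) × ℝ ↦ u q.1.1 (q.2 + q.1.2))
      ((Ici 0 ×ˢ univ) ×ˢ univ) :=
    hu.comp (f := fun q : (ℝ × ℝ) × ℝ ↦ (q.1.1, q.2 + q.1.2)) (by fun_prop)
      fun q hq ↦ ⟨hq.1.1, mem_univ _⟩
  have hleft : ContinuousOn (fun q : (ℝ × ℝ) × ℝ ↦ u q.1.1 q.2) ((Ici 0 ×ˢ univ) ×ˢ univ) :=
    hu.comp (f := fun q : (ℝ × ℝ) × ℝ ↦ (q.1.1, q.2)) (by fun_prop)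
      fun q hq ↦ ⟨hq.1.1, mem_univ _⟩
  have hslope : ContinuousOn (fun q : (ℝ × ℝ) × ℝ ↦ M q.1.1) ((Ici 0 ×ˢ univ) ×ˢ univ) :=
    hM.comp (by fun_prop) fun q hq ↦ hq.1.1
  exact ((hright.sub hleft).sub (hslope.mul (by fun_prop))).sub (by fun_prop)

theorem exists_forall_slopeExcess_le (hu : ContinuousOn (uncurry u) (Ici 0 ×ˢ univ))
    (hper : ∀ t, 0 ≤ t → Periodic (u t) L) (hM : ContinuousOn M (Ici 0)) (hL : 0 < L)
    {T : ℝ} (hT : 0 ≤ T) :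
    ∃ t ∈ Icc 0 T, ∃ h ∈ Icc 0 L, ∃ x, ∀ s ∈ Icc 0 T, ∀ k ∈ Icc 0 L, ∀ y,
      slopeExcess u M ε s k y ≤ slopeExcess u M ε t h x := by
  obtain ⟨⟨t, h⟩, ⟨ht, hh⟩, x, hmax⟩ := exists_forall_le_of_isCompact_of_periodic
    (F := fun p : ℝ × ℝ ↦ slopeExcess u M ε p.1 p.2)
    (isCompact_Icc.prod isCompact_Icc) ((nonempty_Icc.2 hT).prod (nonempty_Icc.2 hL.le)) hL
    ((continuousOn_slopeExcess hu hM).mono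
      (prod_mono_left (prod_mono Icc_subset_Ici_self (subset_univ _))))
    fun p hp y ↦ by
      simp only [slopeExcess, add_right_comm y L, hper p.1 hp.1.1 _]
  exact ⟨t, ht, h, hh, x, fun s hs k hk y ↦ hmax (s, k) ⟨hs, hk⟩ y⟩

theorem le_deriv_sub_deriv_of_eventually_slopeExcess_le
    (hu_right : DifferentiableAt ℝ (fun s ↦ u s (x + h)) t)
    (hu_left : DifferentiableAt ℝ (fun s ↦ u s x) t) (hM : DifferentiableAt ℝ M t)
    (hmax : ∀ᶠ s in nhdsWithin t (Iio t), slopeExcess u M ε s h x ≤ slopeExcess u M ε t h x) :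
    ε ≤ deriv (fun s ↦ u s (x + h)) t - deriv (fun s ↦ u s x) t - deriv M t * h := by
  have hderiv : HasDerivAt (fun s ↦ slopeExcess u M ε s h x)
      (deriv (fun s ↦ u s (x + h)) t - deriv (fun s ↦ u s x) t - deriv M t * h - ε) t := by
    have hlin : HasDerivAt (fun s ↦ ε * s) ε t := by simpa using (hasDerivAt_id t).const_mul ε
    exact ((hu_right.hasDerivAt.sub hu_left.hasDerivAt).sub (hM.hasDerivAt.mul_const h)).sub hlin
  exact sub_nonneg.1 (nonneg_of_hasDerivAt_of_eventually_le_left hderiv hmax)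

end SlopeExcess

namespace IsPeriodicClassicalSolution

variable {a M : ℝ → ℝ} {ν σ L ε t h x : ℝ} {u : ℝ → ℝ → ℝ}

theorem slopeExcess_nonpos_of_forall_le (hu : IsPeriodicClassicalSolution a ν L u) (hν : 0 ≤ ν)
    (hσ : 0 ≤ σ) (ha : ∀ y z, y ≤ z → σ * (z - y) ≤ a z - a y) (hM : IsRiccatiSupersolution σ M)
    (hε : 0 < ε) (ht : 0 < t) (hh : h ∈ Ioo 0 L)
    (hmax_time : ∀ s ∈ Icc 0 t, slopeExcess u M ε s h x ≤ slopeExcess u M ε t h x)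
    (hmax_space : ∀ k ∈ Icc 0 L, ∀ y, slopeExcess u M ε t k y ≤ slopeExcess u M ε t h x) :
    slopeExcess u M ε t h x ≤ 0 := by
  by_contra! hpos
  obtain ⟨hlocMax, hlocMin⟩ := isLocalMax_and_isLocalMin_of_forall_increment_le (v := u t)
    (m := M t) hh fun k hk y ↦ by
      simpa only [slopeExcess, sub_le_sub_iff_right] using hmax_space k hk y
  have hdiff : Differentiable ℝ (u t) := (hu.contDiff t ht).differentiable two_ne_zero
  obtain ⟨hslope_right, hconcave⟩ :=
    deriv_eq_and_deriv_deriv_nonpos_of_isLocalMax_sub_mul hdiff hlocMax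
  obtain ⟨hslope_left, hconvex⟩ :=
    deriv_eq_and_deriv_deriv_nonneg_of_isLocalMin_sub_mul hdiff hlocMin
  have htime := le_deriv_sub_deriv_of_eventually_slopeExcess_le
    (hu.differentiableAt t ht (x + h)) (hu.differentiableAt t ht x) (hM.differentiableAt t ht) <| by
      filter_upwards [Ioo_mem_nhdsLT ht] with s hs using hmax_time s (Ioo_subset_Icc_self hs)
  have hpde_right := hu.pde t ht (x + h)
  have hpde_left := hu.pde t ht x
  rw [hslope_right] at hpde_right
  rw [hslope_left] at hpde_left
  have hincrement : M t * h ≤ u t (x + h) - u t x := by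
    have : 0 < ε * t := mul_pos hε ht
    unfold slopeExcess at hpos
    linarith
  have hspeed : σ * (M t * h) ≤ a (u t (x + h)) - a (u t x) :=
    (mul_le_mul_of_nonneg_left hincrement hσ).trans <|
      ha _ _ (sub_nonneg.1 ((mul_nonneg (hM.nonneg t ht) hh.1.le).trans hincrement))
  have hdiffusion : ν * deriv (deriv (u t)) (x + h) ≤ ν * deriv (deriv (u t)) x :=
    mul_le_mul_of_nonneg_left (hconcave.trans hconvex) hν
  have hadvection := mul_le_mul_of_nonneg_left hspeed (hM.nonneg t ht)
  have hriccati := mul_le_mul_of_nonneg_right (hM.le_deriv t ht) hh.1.le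
  linarith

theorem slopeExcess_nonpos (hu : IsPeriodicClassicalSolution a ν L u) (hL : 0 < L) (hν : 0 ≤ ν)
    (hσ : 0 ≤ σ) (ha : ∀ y z, y ≤ z → σ * (z - y) ≤ a z - a y) (hM : IsRiccatiSupersolution σ M)
    (hinit : ∀ h ∈ Icc 0 L, ∀ x, u 0 (x + h) - u 0 x ≤ M 0 * h)
    (hε : 0 < ε) (ht : 0 ≤ t) (hh : h ∈ Icc 0 L) (x : ℝ) : slopeExcess u M ε t h x ≤ 0 := by
  obtain ⟨t', ht', h', hh', x', hmax⟩ :=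
    exists_forall_slopeExcess_le (ε := ε) hu.continuousOn hu.periodic hM.continuousOn hL ht
  refine (hmax t ⟨ht, le_rfl⟩ h hh x).trans ?_
  rcases ht'.1.eq_or_lt with rfl | ht'_pos
  · simpa [slopeExcess] using hinit h' hh' x'
  have hεt : 0 ≤ ε * t' := (mul_pos hε ht'_pos).le
  rcases hh'.1.eq_or_lt with rfl | hh'_pos
  · simpa [slopeExcess] using hεt
  rcases hh'.2.eq_or_lt with rfl | hh'_lt
  · have := mul_nonneg (hM.nonneg t' ht'_pos) hh'_pos.le
    rw [slopeExcess, hu.periodic t' ht'.1]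
    linarith
  · exact hu.slopeExcess_nonpos_of_forall_le hν hσ ha hM hε ht'_pos ⟨hh'_pos, hh'_lt⟩
      (fun s hs ↦ hmax s ⟨hs.1, hs.2.trans ht'.2⟩ h' hh' x') (hmax t' ht')

theorem deriv_le_of_isRiccatiSupersolution (hu : IsPeriodicClassicalSolution a ν L u) (hL : 0 < L)
    (hν : 0 ≤ ν) (hσ : 0 ≤ σ) (ha : ∀ y z, y ≤ z → σ * (z - y) ≤ a z - a y)
    (hM : IsRiccatiSupersolution σ M)
    (hinit : ∀ h ∈ Icc 0 L, ∀ x, u 0 (x + h) - u 0 x ≤ M 0 * h)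
    (ht : 0 < t) (x : ℝ) : deriv (u t) x ≤ M t := by
  have hincrement : ∀ h ∈ Icc 0 L, ∀ y, u t (y + h) - u t y ≤ M t * h := by
    refine fun h hh y ↦ le_of_forall_pos_le_add fun δ hδ ↦ ?_
    have hexcess := hu.slopeExcess_nonpos hL hν hσ ha hM hinit (div_pos hδ ht) ht.le hh y
    rw [slopeExcess, div_mul_cancel₀ δ ht.ne'] at hexcess
    linarith
  have hderiv : HasDerivAt (fun y ↦ M t * y - u t y) (M t - deriv (u t) x) x := by
    have hdiff : Differentiable ℝ (u t) := (hu.contDiff t ht).differentiable two_ne_zero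
    simpa using ((hasDerivAt_id x).const_mul (M t)).fun_sub (hdiff x).hasDerivAt
  refine sub_nonneg.1 (nonneg_of_hasDerivAt_of_eventually_le_left hderiv ?_)
  filter_upwards [Ioo_mem_nhdsLT (sub_lt_self x hL)] with y hy
  have hle := hincrement (x - y) ⟨by linarith [hy.2], by linarith [hy.1]⟩ y
  rw [add_sub_cancel] at hle
  linarith

end IsPeriodicClassicalSolution

theorem hasDerivAt_div_one_add_mul {σ A t : ℝ} (hne : 1 + σ * A * t ≠ 0) :
    HasDerivAt (fun s ↦ A / (1 + σ * A * s)) (-(σ * (A / (1 + σ * A * t)) ^ 2)) t := by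
  have hden : HasDerivAt (fun s ↦ 1 + σ * A * s) (σ * A) t := by
    simpa using ((hasDerivAt_id t).const_mul (σ * A)).const_add 1
  refine ((hasDerivAt_const t A).div hden hne).congr_deriv ?_
  field_simp
  ring

theorem isRiccatiSupersolution_div {σ A : ℝ} (hσ : 0 ≤ σ) (hA : 0 ≤ A) :
    IsRiccatiSupersolution σ fun t ↦ A / (1 + σ * A * t) := by
  have hden : ∀ t, 0 ≤ t → 0 < 1 + σ * A * t := fun t ht ↦ by positivity
  have hderiv : ∀ t, 0 ≤ t → HasDerivAt (fun s ↦ A / (1 + σ * A * s)) _ t :=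
    fun t ht ↦ hasDerivAt_div_one_add_mul (hden t ht).ne'
  exact ⟨fun t ht ↦ (hderiv t ht).continuousAt.continuousWithinAt,
    fun t ht ↦ (hderiv t ht.le).differentiableAt, fun t ht ↦ div_nonneg hA (hden t ht.le).le,
    fun t ht ↦ (hderiv t ht.le).deriv.ge⟩

theorem div_one_add_mul_le_min {σ A D t : ℝ} (hσ : 0 < σ) (hA : 0 ≤ A) (hAD : A ≤ D)
    (ht : 0 < t) : A / (1 + σ * A * t) ≤ min D (σ⁻¹ * t⁻¹) := by
  have hden : 0 < 1 + σ * A * t := by positivity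
  refine le_min ((div_le_self hA (le_add_of_nonneg_right (by positivity))).trans hAD) ?_
  rw [← mul_inv, inv_eq_one_div, div_le_div_iff₀ hden (mul_pos hσ ht)]
  linarith

namespace IsBurgersSolution

variable {f : ℝ → ℝ} {σ ν : ℝ} {u : ℝ → ℝ → ℝ}

theorem contDiff_slice (hsol : IsBurgersSolution f σ ν u) {t : ℝ} (ht : 0 ≤ t) :
    ContDiff ℝ (⊤ : ℕ∞) (u t) :=
  contDiffOn_univ.1 <| hsol.hu.comp (contDiff_const.prodMk contDiff_id).contDiffOn
    fun x _ ↦ ⟨ht, mem_univ x⟩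

theorem isPeriodicClassicalSolution (hsol : IsBurgersSolution f σ ν u) :
    IsPeriodicClassicalSolution (deriv f) ν 1 u where
  continuousOn := hsol.hu.continuousOn
  contDiff t ht := contDiff_infty.1 (hsol.contDiff_slice ht.le) 2
  differentiableAt t ht x := by
    have huncurry : DifferentiableAt ℝ (uncurry u) (t, x) :=
      (hsol.hu.contDiffAt (prod_mem_nhds (Ici_mem_nhds ht) univ_mem)).differentiableAt (by simp)
    exact huncurry.comp (f := fun s ↦ (s, x)) t (by fun_prop)
  periodic t _ := hsol.hper t
  pde := hsol.hpde

theorem mul_sub_le_deriv_sub_deriv (hsol : IsBurgersSolution f σ ν u) (y z : ℝ) (hyz : y ≤ z) :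
    σ * (z - y) ≤ deriv f z - deriv f y := by
  have hdiff : Differentiable ℝ (deriv f) :=
    (contDiff_infty_iff_deriv.1 hsol.hf).2.differentiable (by simp)
  refine mul_sub_le_image_sub_of_le_deriv hdiff (fun x ↦ ?_) hyz
  simpa only [iteratedDeriv_succ, iteratedDeriv_zero] using hsol.hconv x

end IsBurgersSolution

section SobLp

variable {v : ℝ → ℝ} {C : ℝ}

theorem sobLp_zero_top_le (hv : ∀ x, |v x| ≤ C) : sobLp 0 ⊤ v ≤ C := by
  rw [sobLp, iteratedDeriv_zero, eLpNorm_exponent_top]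
  exact ENNReal.toReal_le_of_le_ofReal ((abs_nonneg _).trans (hv 0))
    (eLpNormEssSup_le_of_ae_bound (Eventually.of_forall hv))

theorem sobLp_zero_le_sobLp_zero_top {p : ℝ≥0∞} (hv_meas : AEStronglyMeasurable v)
    (hv : ∀ x, |v x| ≤ C) : sobLp 0 p v ≤ sobLp 0 ⊤ v := by
  have : IsProbabilityMeasure (volume.restrict (Ioc (0 : ℝ) 1)) := ⟨by simp⟩
  simp only [sobLp, iteratedDeriv_zero]
  refine ENNReal.toReal_mono ?_ (eLpNorm_le_eLpNorm_of_exponent_le le_top hv_meas.restrict)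
  rw [eLpNorm_exponent_top]
  exact (eLpNormEssSup_lt_top_of_ae_bound (Eventually.of_forall hv)).ne

theorem sub_le_sobLp_one_top_mul (hv : ContDiff ℝ 1 v) (hper : Periodic v 1) {x y : ℝ}
    (hxy : x ≤ y) : v y - v x ≤ sobLp 1 ⊤ v * (y - x) := by
  refine image_sub_le_mul_sub_of_deriv_le (hv.differentiable one_ne_zero) (fun z ↦ ?_) hxy
  rw [sobLp, iteratedDeriv_one]
  exact (le_abs_self _).trans <| norm_le_toReal_eLpNorm_top_of_periodic
    (hv.continuous_deriv le_rfl) (periodic_deriv hper) one_pos z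

end SobLp

theorem setIntegral_max_zero_le {α : Type*} [MeasurableSpace α] {μ : Measure α} {s : Set α}
    {g : α → ℝ} {C : ℝ} (hs : μ s ≠ ⊤) (hC : 0 ≤ C) (hg : ∀ x ∈ s, g x ≤ C) :
    ∫ x in s, max (g x) 0 ∂μ ≤ C * μ.real s := by
  have hnorm : ∀ x ∈ s, ‖max (g x) 0‖ ≤ C := fun x hx ↦
    (Real.norm_of_nonneg (le_max_right _ _)).trans_le (max_le (hg x hx) hC)
  exact (le_abs_self _).trans (norm_setIntegral_le_of_norm_le_const hs.lt_top hnorm)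

theorem statement1_general {a : ℝ → ℝ} {σ ν : ℝ} {u : ℝ → ℝ → ℝ}
    (hu : IsPeriodicClassicalSolution a ν 1 u) (hν : 0 ≤ ν) (hσ : 0 ≤ σ)
    (ha : ∀ y z, y ≤ z → σ * (z - y) ≤ a z - a y) (hu₀ : ContDiff ℝ 1 (u 0))
    {t : ℝ} (ht : 0 < t) (hmean : ∫ x in Ioc (0 : ℝ) 1, u t x = 0) :
    (∀ p : ℝ≥0∞, 0 < p → sobLp 0 p (u t) ≤ sobLp 0 ⊤ (u t)) ∧
      sobLp 0 ⊤ (u t) ≤ ∫ x in Ioc (0 : ℝ) 1, max (deriv (u t) x) 0 ∧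
      (∫ x in Ioc (0 : ℝ) 1, max (deriv (u t) x) 0) ≤
        sobLp 1 ⊤ (u 0) / (1 + σ * sobLp 1 ⊤ (u 0) * t) := by
  have hut : ContDiff ℝ 1 (u t) := (hu.contDiff t ht).of_le one_le_two
  have hsup := abs_le_integral_max_deriv_of_periodic hut (hu.periodic t ht.le) one_pos hmean
  refine ⟨fun p _ ↦ sobLp_zero_le_sobLp_zero_top hut.continuous.aestronglyMeasurable hsup,
    sobLp_zero_top_le hsup, ?_⟩
  have hM₀ : 0 ≤ sobLp 1 ⊤ (u 0) := ENNReal.toReal_nonneg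
  have hderiv := hu.deriv_le_of_isRiccatiSupersolution one_pos hν hσ ha
    (isRiccatiSupersolution_div hσ hM₀) (fun h hh x ↦ by
      simpa using sub_le_sobLp_one_top_mul hu₀ (hu.periodic 0 le_rfl)
        (le_add_of_nonneg_right hh.1)) ht
  simpa using setIntegral_max_zero_le (μ := volume) (s := Ioc 0 1) (by simp) (by positivity)
    fun x _ ↦ hderiv x

/-- For every `t > 0` and every `p ∈ [1,∞]`,
`|u(t)|_{L^p} ≤ |u(t)|_{L^∞} ≤ ∫_{S¹} u_x(t)⁺ ≤ min(D, σ⁻¹ t⁻¹)`. -/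
theorem statement1 (f : ℝ → ℝ) (σ ν : ℝ) (u : ℝ → ℝ → ℝ)
    (hsol : IsBurgersSolution f σ ν u) :
    ∀ t, 0 < t → ∀ p : ℝ≥0∞, 1 ≤ p →
      sobLp 0 p (u t) ≤ sobLp 0 ⊤ (u t) ∧
      sobLp 0 ⊤ (u t) ≤ ∫ x in Ioc (0:ℝ) 1, max (deriv (u t) x) 0 ∧
      (∫ x in Ioc (0:ℝ) 1, max (deriv (u t) x) 0) ≤ min (burgersD u) (σ⁻¹ * t⁻¹) := by
  intro t ht p hp
  obtain ⟨hp_top, hsup, hint⟩ := statement1_general hsol.isPeriodicClassicalSolution hsol.hν.le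
    hsol.hσ.le hsol.mul_sub_le_deriv_sub_deriv (contDiff_infty.1 (hsol.contDiff_slice le_rfl) 1) ht
    (hsol.hmean t ht.le)
  exact ⟨hp_top p (zero_lt_one.trans_le hp), hsup, hint.trans <|
    div_one_add_mul_le_min hsol.hσ ENNReal.toReal_nonneg (le_max_right _ _) ht⟩
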